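/- arXiv:2001.02308 — 7 statements merged into one kernel-verified Lean document; each statement's English description precedes it below -/
import Mathlib

section
/- Let (V,ρ,μ,ν) be a representation of a post-Lie algebra (A,[·,·],▷). Then the map ρ + μ − ν : A → gl(V), x ↦ ρ(x) + μ(x) − ν(x), is a representation of the sub-adjacent Lie algebra (A,{·,·}) where {x,y} = x ▷ y − y ▷ x + [x,y]. -/
section Defs

variable (K : Type*) [Field K]
variable {A V : Type*} [AddCommGroup A] [Module K A] [AddCommGroup V] [Module K V]

/-- `f : A → A → V` is bilinear over `K`. -/
def IsBilin (f : A → A → V) : Prop :=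
  (∀ y, IsLinearMap K fun x => f x y) ∧ (∀ x, IsLinearMap K fun y => f x y)

/-- `b` is a Lie bracket on `A`. -/
def IsLieBracket (b : A → A → A) : Prop :=
  IsBilin K b ∧ (∀ x y, b x y = - b y x) ∧
    (∀ x y z, b x (b y z) + b y (b z x) + b z (b x y) = 0)

/-- `(A, b, t)` is a (left) post-Lie algebra. -/
def IsPostLie (b t : A → A → A) : Prop :=
  IsLieBracket K b ∧ IsBilin K t ∧
    (∀ x y z, t x (b y z) = b (t x y) z + b y (t x z)) ∧
    (∀ x y z, t (b x y) z =
      (t x (t y z) - t (t x y) z) - (t y (t x z) - t (t y x) z))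

/-- `ρ` is a representation of the Lie algebra `(A, b)` on `V`. -/
def IsLieRep (b : A → A → A) (ρ : A → V → V) : Prop :=
  (∀ x, IsLinearMap K (ρ x)) ∧ (∀ v, IsLinearMap K fun x => ρ x v) ∧
    (∀ x y v, ρ (b x y) v = ρ x (ρ y v) - ρ y (ρ x v))

/-- `(A, b, α, β)` is a BiHom-Lie algebra. -/
def IsBiHomLie (b : A → A → A) (α β : A → A) : Prop :=
  IsBilin K b ∧ IsLinearMap K α ∧ IsLinearMap K β ∧
    (∀ x, α (β x) = β (α x)) ∧
    (∀ x y, α (b x y) = b (α x) (α y)) ∧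
    (∀ x y, β (b x y) = b (β x) (β y)) ∧
    (∀ x y, b (β x) (α y) = - b (β y) (α x)) ∧
    (∀ x y z, b (β (β x)) (b (β y) (α z)) + b (β (β y)) (b (β z) (α x)) +
        b (β (β z)) (b (β x) (α y)) = 0)

/-- `(V, ρ, φ, ψ)` is a representation of the BiHom-Lie algebra `(A, b, α, β)`. -/
def IsBiHomRep (b : A → A → A) (α β : A → A) (ρ : A → V → V) (φ ψ : V → V) : Prop :=
  IsLinearMap K φ ∧ IsLinearMap K ψ ∧ (∀ v, φ (ψ v) = ψ (φ v)) ∧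
    (∀ x, IsLinearMap K (ρ x)) ∧ (∀ v, IsLinearMap K fun x => ρ x v) ∧
    (∀ x v, ρ (α x) (φ v) = φ (ρ x v)) ∧
    (∀ x v, ρ (β x) (ψ v) = ψ (ρ x v)) ∧
    (∀ x y v, ρ (b (β x) y) (ψ v) = ρ (α (β x)) (ρ y v) - ρ (β y) (ρ (α x) v))

/-- `(A, b, t, α, β)` is a (left) BiHom-post-Lie algebra. -/
def IsBiHomPostLie (b t : A → A → A) (α β : A → A) : Prop :=
  IsBiHomLie K b α β ∧ IsBilin K t ∧
    (∀ x y, α (t x y) = t (α x) (α y)) ∧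
    (∀ x y, β (t x y) = t (β x) (β y)) ∧
    (∀ x y z, t (α (β x)) (b y z) = b (t (β x) y) (β z) + b (β y) (t (α x) z)) ∧
    (∀ x y z, t (b (β x) (α y)) (β z) =
      (t (α (β x)) (t (α y) z) - t (t (β x) (α y)) (β z)) -
      (t (α (β y)) (t (α x) z) - t (t (β y) (α x)) (β z)))

/-- `(V, bv, ρ, φ, ψ)` is an `A`-module `K`-algebra over the BiHom-Lie algebra
`(A, b, α, β)`. -/
def IsModuleKAlgebra (b : A → A → A) (α β : A → A) (bv : V → V → V)
    (ρ : A → V → V) (φ ψ : V → V) : Prop :=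
  IsBiHomLie K bv φ ψ ∧ IsBiHomRep K b α β ρ φ ψ ∧
    (∀ x u v, ρ (α (β x)) (bv u v) = bv (ρ (β x) u) (ψ v) + bv (ψ u) (ρ (α x) v))

end Defs

/-- A representation of a post-Lie algebra `(A, b, t)` on `V`. -/
def IsPostLieRep (K : Type*) {A V : Type*} [Field K] [AddCommGroup A] [Module K A]
    [AddCommGroup V] [Module K V] (b t : A → A → A) (ρ μ ν : A → V → V) : Prop :=
  IsLieRep K b ρ ∧
    (∀ x, IsLinearMap K (μ x)) ∧ (∀ v, IsLinearMap K fun x => μ x v) ∧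
    (∀ x, IsLinearMap K (ν x)) ∧ (∀ v, IsLinearMap K fun x => ν x v) ∧
    (∀ x y v, ν (b x y) v = ρ x (ν y v) - ρ y (ν x v)) ∧
    (∀ x y v, ρ (t x y) v = μ x (ρ y v) - ρ y (μ x v)) ∧
    (∀ x y v, μ (b x y) v = μ x (μ y v) - μ (t x y) v - μ y (μ x v) + μ (t y x) v) ∧
    (∀ x y v, ν y (ρ x v) = μ x (ν y v) - ν y (μ x v) - ν (t x y) v + ν y (ν x v))

/-!
Everything happens inside the associative algebra `End V`, with its commutator bracket. If `σ`
preserves the brackets, expanding `⁅σ x + τ x, σ y + τ y⁆` shows that `σ + τ` preserves them exactly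
when `τ {x, y} = ⁅σ x, τ y⁆ + ⁅τ x, σ y⁆ + ⁅τ x, τ y⁆`. The axiom for `μ [x, y]` says that `μ` is
a representation of the sub-adjacent algebra. It can then be deformed twice, first by `τ = ρ` and
then by `τ = -ν`; the remaining axioms are what these two deformations require.
-/

/-- `f` carries the operation `c` to the bracket of `L`: the multiplicative half of being a Lie
algebra representation. `f` is a bare function, so that linear maps and pointwise sums are covered
alike. -/
def IsBracketHom {A L : Type*} [Bracket L L] (c : A → A → A) (f : A → L) : Prop :=
  ∀ x y, f (c x y) = ⁅f x, f y⁆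

theorem IsBracketHom.add_iff {A L : Type*} [LieRing L] {c : A → A → A} {σ τ : A → L}
    (hσ : IsBracketHom c σ) :
    IsBracketHom c (σ + τ) ↔
      ∀ x y, τ (c x y) = ⁅σ x, τ y⁆ + ⁅τ x, σ y⁆ + ⁅τ x, τ y⁆ := by
  refine forall₂_congr fun x y => ?_
  have expand : ⁅σ x + τ x, σ y + τ y⁆ =
      σ (c x y) + (⁅σ x, τ y⁆ + ⁅τ x, σ y⁆ + ⁅τ x, τ y⁆) := by
    rw [hσ x y, add_lie, lie_add, lie_add]
    abel
  simp only [Pi.add_apply, expand, add_right_inj]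

theorem IsBracketHom.sub_iff {A L : Type*} [LieRing L] {c : A → A → A} {σ τ : A → L}
    (hσ : IsBracketHom c σ) :
    IsBracketHom c (σ - τ) ↔
      ∀ x y, τ (c x y) = ⁅σ x, τ y⁆ + ⁅τ x, σ y⁆ - ⁅τ x, τ y⁆ := by
  rw [sub_eq_add_neg, hσ.add_iff]
  refine forall₂_congr fun x y => ?_
  simp only [Pi.neg_apply, lie_neg, neg_lie, neg_neg]
  rw [neg_eq_iff_eq_neg, neg_add, neg_add, neg_neg, neg_neg, ← sub_eq_add_neg]

/-- The bracket `{x, y} = x ▷ y - y ▷ x + [x, y]` of the sub-adjacent Lie algebra, where `b` is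
`[·, ·]` and `t` is `▷`. -/
def subAdjacentBracket {A : Type*} [AddCommGroup A] (b t : A → A → A) (x y : A) : A :=
  t x y - t y x + b x y

/-- A representation of a post-Lie algebra `(A, b, t)` with values in an associative ring `E`
instead of `End V`. Linearity is bundled into the maps. -/
structure IsAssocPostLieRep {R A E : Type*} [Semiring R] [AddCommGroup A] [Module R A]
    [Ring E] [Module R E] (b t : A → A → A) (ρ μ ν : A →ₗ[R] E) : Prop where
  rho_bracket : IsBracketHom b ρ
  nu_bracket : ∀ x y, ν (b x y) = ρ x * ν y - ρ y * ν x
  rho_product : ∀ x y, ρ (t x y) = μ x * ρ y - ρ y * μ x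
  mu_bracket : ∀ x y, μ (b x y) = μ x * μ y - μ (t x y) - μ y * μ x + μ (t y x)
  nu_mul_rho : ∀ x y, ν y * ρ x = μ x * ν y - ν y * μ x - ν (t x y) + ν y * ν x

section AssociativeAlgebra

attribute [local instance] LieRing.ofAssociativeRing

variable {R A E : Type*} [Semiring R] [AddCommGroup A] [Module R A] [Ring E] [Module R E]
  {b t : A → A → A} {ρ μ ν : A →ₗ[R] E}

namespace IsAssocPostLieRep

theorem isBracketHom_mu (h : IsAssocPostLieRep b t ρ μ ν) :
    IsBracketHom (subAdjacentBracket b t) μ := fun x y => by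
  rw [subAdjacentBracket, map_add, map_sub, h.mu_bracket, Ring.lie_def]
  abel

theorem rho_subAdjacentBracket (h : IsAssocPostLieRep b t ρ μ ν) (x y : A) :
    ρ (subAdjacentBracket b t x y) = ⁅μ x, ρ y⁆ + ⁅ρ x, μ y⁆ + ⁅ρ x, ρ y⁆ := by
  have rho_product (x y : A) : ρ (t x y) = ⁅μ x, ρ y⁆ := h.rho_product x y
  rw [subAdjacentBracket, map_add, map_sub, rho_product, rho_product, h.rho_bracket,
    ← lie_skew (ρ x) (μ y), sub_eq_add_neg]

theorem isBracketHom_rho_add_mu (h : IsAssocPostLieRep b t ρ μ ν) :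
    IsBracketHom (subAdjacentBracket b t) (ρ + μ : A →ₗ[R] E) := by
  rw [add_comm]
  exact h.isBracketHom_mu.add_iff.2 h.rho_subAdjacentBracket

theorem nu_product (h : IsAssocPostLieRep b t ρ μ ν) (x y : A) :
    ν (t x y) = μ x * ν y - ν y * (ρ x + μ x) + ν y * ν x := by
  rw [mul_add, h.nu_mul_rho]
  abel

theorem nu_subAdjacentBracket (h : IsAssocPostLieRep b t ρ μ ν) (x y : A) :
    ν (subAdjacentBracket b t x y) =
      ⁅(ρ + μ) x, ν y⁆ + ⁅ν x, (ρ + μ) y⁆ - ⁅ν x, ν y⁆ := by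
  rw [subAdjacentBracket, map_add, map_sub, h.nu_product, h.nu_product, h.nu_bracket]
  simp only [LinearMap.add_apply, Ring.lie_def]
  noncomm_ring

end IsAssocPostLieRep

theorem subAdjacent_rep_of_postLieRep_general (h : IsAssocPostLieRep b t ρ μ ν) :
    IsBracketHom (subAdjacentBracket b t) (ρ + μ - ν : A →ₗ[R] E) :=
  h.isBracketHom_rho_add_mu.sub_iff.2 h.nu_subAdjacentBracket

end AssociativeAlgebra

theorem exists_linearMap₂_eq {R M N P : Type*} [CommSemiring R] [AddCommMonoid M] [Module R M]
    [AddCommMonoid N] [Module R N] [AddCommMonoid P] [Module R P] {f : M → N → P}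
    (hf_right : ∀ x, IsLinearMap R (f x)) (hf_left : ∀ y, IsLinearMap R fun x => f x y) :
    ∃ F : M →ₗ[R] N →ₗ[R] P, f = fun x y => F x y :=
  ⟨LinearMap.mk₂ R f (fun x x' y => (hf_left y).map_add x x')
    (fun c x y => (hf_left y).map_smul c x) (fun x => (hf_right x).map_add)
    (fun c x => (hf_right x).map_smul c), rfl⟩

section EndomorphismRing

variable {K A V : Type*} [Field K] [AddCommGroup A] [Module K A] [AddCommGroup V] [Module K V]
  {b t : A → A → A}

theorem isLieRep_coe_iff {σ : A →ₗ[K] Module.End K V} :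
    IsLieRep K b (fun x v => σ x v) ↔ IsBracketHom b σ :=
  ⟨fun h x y => LinearMap.ext (h.2.2 x y), fun h =>
    ⟨fun x => (σ x).isLinear, fun v => (σ.flip v).isLinear, fun x y => LinearMap.congr_fun (h x y)⟩⟩

theorem IsPostLieRep.isAssocPostLieRep {ρ μ ν : A →ₗ[K] Module.End K V}
    (h : IsPostLieRep K b t (fun x v => ρ x v) (fun x v => μ x v) (fun x v => ν x v)) :
    IsAssocPostLieRep b t ρ μ ν := by
  obtain ⟨hρ, -, -, -, -, nu_bracket, rho_product, mu_bracket, nu_mul_rho⟩ := h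
  exact
    { rho_bracket := isLieRep_coe_iff.1 hρ
      nu_bracket := fun x y => LinearMap.ext (nu_bracket x y)
      rho_product := fun x y => LinearMap.ext (rho_product x y)
      mu_bracket := fun x y => LinearMap.ext (mu_bracket x y)
      nu_mul_rho := fun x y => LinearMap.ext (nu_mul_rho x y) }

theorem IsPostLieRep.exists_linearMap_eq {ρ μ ν : A → V → V} (h : IsPostLieRep K b t ρ μ ν) :
    ∃ ρ' μ' ν' : A →ₗ[K] Module.End K V,
      (ρ = fun x v => ρ' x v) ∧ (μ = fun x v => μ' x v) ∧ (ν = fun x v => ν' x v) := by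
  obtain ⟨⟨hρ_right, hρ_left, -⟩, hμ_right, hμ_left, hν_right, hν_left, -⟩ := h
  obtain ⟨ρ', hρ'⟩ := exists_linearMap₂_eq hρ_right hρ_left
  obtain ⟨μ', hμ'⟩ := exists_linearMap₂_eq hμ_right hμ_left
  obtain ⟨ν', hν'⟩ := exists_linearMap₂_eq hν_right hν_left
  exact ⟨ρ', μ', ν', hρ', hμ', hν'⟩

end EndomorphismRing

/-- `ρ + μ - ν` is a representation of the sub-adjacent Lie algebra. -/
theorem subAdjacent_rep_of_postLieRep {K A V : Type*} [Field K] [CharZero K]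
    [AddCommGroup A] [Module K A] [AddCommGroup V] [Module K V]
    (b t : A → A → A) (ρ μ ν : A → V → V)
    (hpl : IsPostLie K b t) (hrep : IsPostLieRep K b t ρ μ ν) :
    IsLieRep K (fun x y => t x y - t y x + b x y)
      (fun x v => ρ x v + μ x v - ν x v) := by
  obtain ⟨ρ, μ, ν, rfl, rfl, rfl⟩ := hrep.exists_linearMap_eq
  exact isLieRep_coe_iff.2 (subAdjacent_rep_of_postLieRep_general hrep.isAssocPostLieRep)
end

section
/- Let (A,[·,·]) be a Lie algebra over a field K of characteristic zero and let α, β : A → A be two commuting Lie algebra morphisms. Then (A,[·,·]_{α,β},α,β), where [x,y]_{α,β} = [α(x),β(y)], is a BiHom-Lie algebra. -/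
/-!
Both BiHom identities for `[x, y]_{α,β} = [α x, β y]` are instances of the corresponding Lie
identities: since `α` and `β` commute, `[β x, α y]_{α,β}` is `[x', y']` with `x' = α (β x)`,
`y' = α (β y)`, and since `β` is moreover a morphism, `[β² x, [β y, α z]_{α,β}]_{α,β}` is
`[x'', [y'', z'']]` with `x'' = α (β² x)`, `y'' = α (β² y)`, `z'' = α (β² z)`.
-/

open Function

theorem IsBilin.bicompl {K A B V : Type*} [Field K] [AddCommGroup A] [Module K A]
    [AddCommGroup B] [Module K B] [AddCommGroup V] [Module K V]
    {f : A → A → V} {α β : B → A} (hf : IsBilin K f)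
    (hα : IsLinearMap K α) (hβ : IsLinearMap K β) : IsBilin K (bicompl f α β) :=
  ⟨fun y => ((hf.1 (β y)).mk' _ ∘ₗ hα.mk' α).isLinear,
    fun x => ((hf.2 (α x)).mk' _ ∘ₗ hβ.mk' β).isLinear⟩

theorem semiconj₂_bicompl {A B : Type*} {φ : A → B} {b : A → A → A} {c : B → B → B}
    {α β : A → A} {α' β' : B → B} (hφ : Semiconj₂ φ b c)
    (hα : Semiconj φ α α') (hβ : Semiconj φ β β') :
    Semiconj₂ φ (bicompl b α β) (bicompl c α' β') := fun x y => by
  simp only [bicompl, hφ.eq, hα.eq, hβ.eq]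

section Twist

variable {A V : Type*} {α β : A → A}

theorem bicompl_apply_of_commute {f : A → A → V} (hαβ : Function.Commute α β) (x y : A) :
    bicompl f α β (β x) (α y) = f (α (β x)) (α (β y)) := by
  simp only [bicompl, hαβ.eq]

theorem bicompl_bicompl_apply_of_commute {b : A → A → A} (hβ : Semiconj₂ β b b)
    (hαβ : Function.Commute α β) (x y z : A) :
    bicompl b α β (β (β x)) (bicompl b α β (β y) (α z)) =
      b (α (β (β x))) (b (α (β (β y))) (α (β (β z)))) := by
  simp only [bicompl, hβ.eq, hαβ.eq]

theorem bicompl_skew_of_commute [Neg V] {f : A → A → V} (hf : ∀ x y, f x y = -f y x)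
    (hαβ : Function.Commute α β) (x y : A) :
    bicompl f α β (β x) (α y) = -bicompl f α β (β y) (α x) := by
  simpa only [bicompl_apply_of_commute hαβ] using hf (α (β x)) (α (β y))

theorem bicompl_jacobi_of_commute [Add A] [Zero A] {b : A → A → A}
    (hb : ∀ x y z, b x (b y z) + b y (b z x) + b z (b x y) = 0)
    (hβ : Semiconj₂ β b b) (hαβ : Function.Commute α β) (x y z : A) :
    bicompl b α β (β (β x)) (bicompl b α β (β y) (α z)) +
      bicompl b α β (β (β y)) (bicompl b α β (β z) (α x)) +
      bicompl b α β (β (β z)) (bicompl b α β (β x) (α y)) = 0 := by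
  simpa only [bicompl_bicompl_apply_of_commute hβ hαβ] using
    hb (α (β (β x))) (α (β (β y))) (α (β (β z)))

end Twist

theorem biHomLie_of_twisted_lie_general {K A : Type*} [Field K]
    [AddCommGroup A] [Module K A] {b : A → A → A} {α β : A → A}
    (hb : IsLieBracket K b) (hα : IsLinearMap K α) (hβ : IsLinearMap K β)
    (hαm : Semiconj₂ α b b) (hβm : Semiconj₂ β b b) (hαβ : Function.Commute α β) :
    IsBiHomLie K (bicompl b α β) α β := by
  obtain ⟨bilin, skew, jacobi⟩ := hb
  exact ⟨bilin.bicompl hα hβ, hα, hβ, hαβ,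
    semiconj₂_bicompl hαm (Function.Commute.refl α) hαβ,
    semiconj₂_bicompl hβm hαβ.symm (Function.Commute.refl β),
    bicompl_skew_of_commute skew hαβ,
    bicompl_jacobi_of_commute jacobi hβm hαβ⟩

/-- twisting a Lie algebra by two commuting morphisms yields a
BiHom-Lie algebra. -/
theorem biHomLie_of_twisted_lie {K A : Type*} [Field K] [CharZero K]
    [AddCommGroup A] [Module K A] (b : A → A → A) (α β : A → A)
    (hb : IsLieBracket K b)
    (hα : IsLinearMap K α) (hβ : IsLinearMap K β)
    (hαm : ∀ x y, α (b x y) = b (α x) (α y))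
    (hβm : ∀ x y, β (b x y) = b (β x) (β y))
    (hcomm : ∀ x, α (β x) = β (α x)) :
    IsBiHomLie K (fun x y => b (α x) (β y)) α β :=
  biHomLie_of_twisted_lie_general hb hα hβ hαm hβm hcomm
end

section
/- Let (A,[·,·]) be a Lie algebra over a field K of characteristic zero, α, β : A → A two commuting Lie algebra morphisms, (V,ρ) a Lie algebra representation of (A,[·,·]), and φ, ψ : V → V two commuting linear maps satisfying ρ(α(x))∘φ = φ∘ρ(x) and ρ(β(x))∘ψ = ψ∘ρ(x) for all x ∈ A. Define ρ̃ : A → gl(V) by ρ̃(x)(v) = ρ(α(x))(ψ(v)). Then (V,ρ̃,φ,ψ) is a representation of the BiHom-Lie algebra (A,[·,·]_{α,β},α,β), where [x,y]_{α,β} = [α(x),β(y)]. -/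
/-!
If maps `γ` on `A` and `χ` on `V` satisfy `ρ (γ x) (χ v) = χ (ρ x v)` and commute with `α` and `ψ`
respectively, then the twisted action satisfies the same identity. Both equivariance axioms are
instances of this, for `(γ, χ) = (α, φ)` and `(β, ψ)`. In the bracket axiom, moving `ψ` inwards
through `ρ` leaves every term evaluated at `ψ (ψ v)`, and what remains is the commutator identity
of `ρ` at `α (α (β x))` and `α (β y)`.
-/

section Twist

variable {A V : Type*}

/-- The twist `[x, y]_{α,β} = [α x, β y]` of a bracket, which turns a Lie algebra with commuting
endomorphisms `α` and `β` into a BiHom-Lie algebra. -/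
def twistedBracket (b : A → A → A) (α β : A → A) : A → A → A :=
  fun x y => b (α x) (β y)

/-- The twist `ρ̃ x v = ρ (α x) (ψ v)` of an action `ρ` of `A` on `V`, which turns a representation
of a Lie bracket into a representation of its `twistedBracket`. -/
def twistedAction (ρ : A → V → V) (α : A → A) (ψ : V → V) : A → V → V :=
  fun x v => ρ (α x) (ψ v)

theorem twistedAction_equivariant {ρ : A → V → V} {α γ : A → A} {ψ χ : V → V}
    (hαγ : Function.Commute α γ) (hψχ : Function.Commute ψ χ)
    (hρ : ∀ x v, ρ (γ x) (χ v) = χ (ρ x v)) (x : A) (v : V) :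
    twistedAction ρ α ψ (γ x) (χ v) = χ (twistedAction ρ α ψ x v) :=
  calc ρ (α (γ x)) (ψ (χ v))
    _ = ρ (γ (α x)) (χ (ψ v)) := by rw [hαγ x, hψχ v]
    _ = χ (ρ (α x) (ψ v)) := hρ (α x) (ψ v)

theorem twistedAction_twistedBracket [Sub V] {b : A → A → A} {ρ : A → V → V} {α β : A → A}
    {ψ : V → V} (hα : ∀ x y, α (b x y) = b (α x) (α y)) (hαβ : Function.Commute α β)
    (hψ : ∀ x v, ρ (β x) (ψ v) = ψ (ρ x v))
    (hρ : ∀ x y v, ρ (b x y) v = ρ x (ρ y v) - ρ y (ρ x v)) (x y : A) (v : V) :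
    twistedAction ρ α ψ (twistedBracket b α β (β x) y) (ψ v) =
      twistedAction ρ α ψ (α (β x)) (twistedAction ρ α ψ y v) -
        twistedAction ρ α ψ (β y) (twistedAction ρ α ψ (α x) v) := by
  have move_inward (z : A) : ψ (twistedAction ρ α ψ z v) = ρ (α (β z)) (ψ (ψ v)) := by
    rw [hαβ z, hψ, twistedAction]
  calc ρ (α (b (α (β x)) (β y))) (ψ (ψ v))
    _ = ρ (b (α (α (β x))) (α (β y))) (ψ (ψ v)) := by rw [hα]
    _ = ρ (α (α (β x))) (ρ (α (β y)) (ψ (ψ v))) -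
          ρ (α (β y)) (ρ (α (α (β x))) (ψ (ψ v))) := hρ _ _ _
    _ = ρ (α (α (β x))) (ψ (twistedAction ρ α ψ y v)) -
          ρ (α (β y)) (ψ (twistedAction ρ α ψ (α x) v)) := by
      rw [move_inward y, move_inward (α x), hαβ x]

end Twist

section Linear

variable {R A V : Type*} [Semiring R] [AddCommMonoid V] [Module R V]

theorem isLinearMap_twistedAction_right {ρ : A → V → V} {ψ : V → V}
    (hρ : ∀ x, IsLinearMap R (ρ x)) (hψ : IsLinearMap R ψ) (α : A → A) (x : A) :
    IsLinearMap R (twistedAction ρ α ψ x) :=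
  ((hρ (α x)).mk' _ ∘ₗ hψ.mk' _).isLinear

theorem isLinearMap_twistedAction_left [AddCommMonoid A] [Module R A] {ρ : A → V → V} {α : A → A}
    (hρ : ∀ v, IsLinearMap R fun x => ρ x v) (hα : IsLinearMap R α) (ψ : V → V) (v : V) :
    IsLinearMap R fun x => twistedAction ρ α ψ x v :=
  ((hρ (ψ v)).mk' _ ∘ₗ hα.mk' _).isLinear

end Linear

theorem biHomRep_of_twisted_rep_general {K A V : Type*} [Field K]
    [AddCommGroup A] [Module K A] [AddCommGroup V] [Module K V]
    {b : A → A → A} {α β : A → A} {ρ : A → V → V} {φ ψ : V → V}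
    (hα : IsLinearMap K α) (hαm : ∀ x y, α (b x y) = b (α x) (α y))
    (hcomm : Function.Commute α β) (hρ : IsLieRep K b ρ)
    (hφ : IsLinearMap K φ) (hψ : IsLinearMap K ψ) (hφψ : Function.Commute φ ψ)
    (h1 : ∀ x v, ρ (α x) (φ v) = φ (ρ x v)) (h2 : ∀ x v, ρ (β x) (ψ v) = ψ (ρ x v)) :
    IsBiHomRep K (twistedBracket b α β) α β (twistedAction ρ α ψ) φ ψ := by
  obtain ⟨linear_right, linear_left, commutator⟩ := hρ
  exact ⟨hφ, hψ, hφψ,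
    isLinearMap_twistedAction_right linear_right hψ α,
    isLinearMap_twistedAction_left linear_left hα ψ,
    twistedAction_equivariant (.refl α) hφψ.symm h1,
    twistedAction_equivariant hcomm (.refl ψ) h2,
    twistedAction_twistedBracket hαm hcomm h2 commutator⟩

/-- twisting a representation of a Lie algebra yields a
representation of the twisted BiHom-Lie algebra. -/
theorem biHomRep_of_twisted_rep {K A V : Type*} [Field K] [CharZero K]
    [AddCommGroup A] [Module K A] [AddCommGroup V] [Module K V]
    (b : A → A → A) (α β : A → A) (ρ : A → V → V) (φ ψ : V → V)
    (hb : IsLieBracket K b)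
    (hα : IsLinearMap K α) (hβ : IsLinearMap K β)
    (hαm : ∀ x y, α (b x y) = b (α x) (α y))
    (hβm : ∀ x y, β (b x y) = b (β x) (β y))
    (hcomm : ∀ x, α (β x) = β (α x))
    (hρ : IsLieRep K b ρ)
    (hφ : IsLinearMap K φ) (hψ : IsLinearMap K ψ)
    (hφψ : ∀ v, φ (ψ v) = ψ (φ v))
    (h1 : ∀ x v, ρ (α x) (φ v) = φ (ρ x v))
    (h2 : ∀ x v, ρ (β x) (ψ v) = ψ (ρ x v)) :
    IsBiHomRep K (fun x y => b (α x) (β y)) α β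
      (fun x v => ρ (α x) (ψ v)) φ ψ :=
  biHomRep_of_twisted_rep_general hα hαm hcomm hρ hφ hψ hφψ h1 h2
end

section
/- Let (A,[·,·],α,β) and (V,{·,·},φ,ψ) be two regular BiHom-Lie algebras and ρ : A → gl(V) a linear map. Then (V,{·,·},ρ,φ,ψ) is an A-module K-algebra if and only if the direct sum A ⊕ V is a BiHom-Lie algebra under the bracket [x+u, y+v]_ρ = [x,y] + ρ(x)v − ρ(α⁻¹β(y))φψ⁻¹(u) + {u,v}, with structure maps (α+φ)(x+u) = α(x)+φ(u) and (β+ψ)(x+u) = β(x)+ψ(u). -/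
/-!
Write `σ = α⁻¹β` and `τ = φψ⁻¹`. All that matters about them is `σα = β` and `τψ = φ`: as `α` and
`ψ` are onto, these equations make `σ` and `τ` linear and compatible with the structure maps, and
`σ` multiplicative. The bracket of `(β + ψ)(p)` with `(α + φ)(q)` is free of `σ` and `τ`, hence
skew-symmetric. In the Jacobi identity `σ` survives only in `σ [β x, α y]`, and the identity splits,
by the number of arguments taken from `V`, into four: those of `A` and `V`, and the representation
and derivation laws of `ρ` at `(σ x, β y, φ w)` and `(σ x, ψ u, φ v)`. By surjectivity such triples
are arbitrary.
-/

section CompEq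

open Function

theorem isLinearMap_of_comp_eq {R M N P : Type*} [Semiring R] [AddCommMonoid M]
    [AddCommMonoid N] [AddCommMonoid P] [Module R M] [Module R N] [Module R P]
    {f : M → N} {g : M → P} {σ : N → P} (hf : IsLinearMap R f) (hg : IsLinearMap R g)
    (hf_surj : Surjective f) (hσ : ∀ x, σ (f x) = g x) : IsLinearMap R σ where
  map_add := hf_surj.forall₂.2 fun x y => by rw [← hf.map_add, hσ, hσ, hσ, hg.map_add]
  map_smul c := hf_surj.forall.2 fun x => by rw [← hf.map_smul, hσ, hσ, hg.map_smul]

variable {X Y Z : Type*}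

theorem map_mul_of_comp_eq {mulX : X → X → X} {mulY : Y → Y → Y} {mulZ : Z → Z → Z}
    {f : X → Y} {g : X → Z} {σ : Y → Z}
    (hf : ∀ x y, f (mulX x y) = mulY (f x) (f y)) (hg : ∀ x y, g (mulX x y) = mulZ (g x) (g y))
    (hf_surj : Surjective f) (hσ : ∀ x, σ (f x) = g x) (x y : Y) :
    σ (mulY x y) = mulZ (σ x) (σ y) := by
  obtain ⟨x, rfl⟩ := hf_surj x
  obtain ⟨y, rfl⟩ := hf_surj y
  rw [← hf, hσ, hσ, hσ, hg]

theorem commute_of_comp_eq {f g h σ : X → X} (hf : Function.Commute h f)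
    (hg : Function.Commute h g) (hf_surj : Surjective f) (hσ : ∀ x, σ (f x) = g x) :
    Function.Commute h σ :=
  hf_surj.forall.2 fun x => by rw [hσ, hg.eq, ← hσ, hf.eq]

end CompEq

section Semidirect

open Function

variable {K A V : Type*} [Field K] [AddCommGroup A] [Module K A] [AddCommGroup V] [Module K V]
  {b : A → A → A} {α β σ : A → A} {bv : V → V → V} {φ ψ τ : V → V} {ρ : A →ₗ[K] V →ₗ[K] V}

theorem IsBiHomLie.of_injective (hb : IsBiHomLie K b α β) (i : V →ₗ[K] A) (hi : Injective i)
    (hi_bracket : ∀ u v, i (bv u v) = b (i u) (i v)) (hiφ : ∀ v, i (φ v) = α (i v))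
    (hiψ : ∀ v, i (ψ v) = β (i v)) : IsBiHomLie K bv φ ψ := by
  obtain ⟨⟨hb_left, hb_right⟩, hα, hβ, hαβ, hα_mul, hβ_mul, hskew, hjac⟩ := hb
  refine ⟨⟨fun w => ⟨fun u v => hi ?_, fun c u => hi ?_⟩,
      fun u => ⟨fun v w => hi ?_, fun c v => hi ?_⟩⟩,
    ⟨fun u v => hi ?_, fun c u => hi ?_⟩, ⟨fun u v => hi ?_, fun c u => hi ?_⟩,
    fun v => hi ?_, fun u v => hi ?_, fun u v => hi ?_, fun u v => hi ?_, fun u v w => hi ?_⟩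
  · simp only [map_add, hi_bracket, (hb_left _).map_add]
  · simp only [map_smul, hi_bracket, (hb_left _).map_smul]
  · simp only [map_add, hi_bracket, (hb_right _).map_add]
  · simp only [map_smul, hi_bracket, (hb_right _).map_smul]
  · simp only [map_add, hiφ, hα.map_add]
  · simp only [map_smul, hiφ, hα.map_smul]
  · simp only [map_add, hiψ, hβ.map_add]
  · simp only [map_smul, hiψ, hβ.map_smul]
  · simp only [hiφ, hiψ, hαβ]
  · simp only [hi_bracket, hiφ, hα_mul]
  · simp only [hi_bracket, hiψ, hβ_mul]
  · simp only [map_neg, hi_bracket, hiφ, hiψ, hskew (i u)]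
  · simp only [map_add, map_zero, hi_bracket, hiφ, hiψ, hjac]

/-- The bracket `[x + u, y + v]_ρ` of the semidirect sum `A ⊕ V`, carried by `A × V`. Arbitrary
maps `σ` and `τ` take the places of `α⁻¹β` and `φψ⁻¹`. -/
def semidirectBracket (b : A → A → A) (bv : V → V → V) (ρ : A →ₗ[K] V →ₗ[K] V) (σ : A → A)
    (τ : V → V) (p q : A × V) : A × V :=
  (b p.1 q.1, ρ p.1 q.2 - ρ (σ q.1) (τ p.2) + bv p.2 q.2)

theorem isBilin_semidirectBracket (hb : IsBilin K b) (hbv : IsBilin K bv)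
    (hσ : IsLinearMap K σ) (hτ : IsLinearMap K τ) :
    IsBilin K (semidirectBracket b bv ρ σ τ) := by
  refine ⟨fun r => ⟨fun p q => Prod.ext ((hb.1 _).map_add _ _) ?_,
      fun c p => Prod.ext ((hb.1 _).map_smul _ _) ?_⟩,
    fun p => ⟨fun q r => Prod.ext ((hb.2 _).map_add _ _) ?_,
      fun c q => Prod.ext ((hb.2 _).map_smul _ _) ?_⟩⟩
  · simp only [semidirectBracket, Prod.fst_add, Prod.snd_add, hτ.map_add, (hbv.1 _).map_add,
      map_add, LinearMap.add_apply]
    abel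
  · simp only [semidirectBracket, Prod.smul_fst, Prod.smul_snd, hτ.map_smul, (hbv.1 _).map_smul,
      map_smul, LinearMap.smul_apply, smul_add, smul_sub]
  · simp only [semidirectBracket, Prod.fst_add, Prod.snd_add, hσ.map_add, (hbv.2 _).map_add,
      map_add, LinearMap.add_apply]
    abel
  · simp only [semidirectBracket, Prod.smul_fst, Prod.smul_snd, hσ.map_smul, (hbv.2 _).map_smul,
      map_smul, LinearMap.smul_apply, smul_add, smul_sub]

theorem prodMap_semidirectBracket_iff (hbv : IsBilin K bv) (hφ : IsLinearMap K φ)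
    (hτ : IsLinearMap K τ) (hα_mul : ∀ x y, α (b x y) = b (α x) (α y))
    (hφ_mul : ∀ u v, φ (bv u v) = bv (φ u) (φ v)) (hασ : Function.Commute α σ)
    (hφτ : Function.Commute φ τ) :
    (∀ p q, Prod.map α φ (semidirectBracket b bv ρ σ τ p q) =
        semidirectBracket b bv ρ σ τ (Prod.map α φ p) (Prod.map α φ q)) ↔
      ∀ x v, ρ (α x) (φ v) = φ (ρ x v) := by
  constructor
  · intro h x v
    have hxv := congrArg Prod.snd (h (x, 0) (0, v))
    simpa [semidirectBracket, hτ.map_zero, hφ.map_zero, (hbv.1 _).map_zero] using hxv.symm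
  · intro h p q
    refine Prod.ext (hα_mul _ _) ?_
    simp only [semidirectBracket, Prod.map_fst, Prod.map_snd, hφ.map_add, hφ.map_sub, hφ_mul,
      ← h, hασ.eq, hφτ.eq]

theorem semidirectBracket_skew (hb : ∀ x y, b (β x) (α y) = -b (β y) (α x))
    (hbv : ∀ u v, bv (ψ u) (φ v) = -bv (ψ v) (φ u)) (hσ : ∀ x, σ (α x) = β x)
    (hτ : ∀ v, τ (ψ v) = φ v) (p q : A × V) :
    semidirectBracket b bv ρ σ τ (Prod.map β ψ p) (Prod.map α φ q) =
      -semidirectBracket b bv ρ σ τ (Prod.map β ψ q) (Prod.map α φ p) := by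
  refine Prod.ext (hb _ _) ?_
  simp only [semidirectBracket, Prod.map_fst, Prod.map_snd, Prod.snd_neg, hσ, hτ, hbv p.2]
  abel

theorem snd_semidirectBracket_semidirectBracket (hbv : IsBilin K bv)
    (hσ : ∀ x, σ (α x) = β x) (hτ : ∀ v, τ (ψ v) = φ v) (p q r : A × V) :
    (semidirectBracket b bv ρ σ τ (Prod.map β ψ (Prod.map β ψ p))
        (semidirectBracket b bv ρ σ τ (Prod.map β ψ q) (Prod.map α φ r))).2 =
      ρ (β (β p.1)) (ρ (β q.1) (φ r.2)) - ρ (β (β p.1)) (ρ (β r.1) (φ q.2)) -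
        ρ (σ (b (β q.1) (α r.1))) (φ (ψ p.2)) +
      (ρ (β (β p.1)) (bv (ψ q.2) (φ r.2)) + bv (ψ (ψ p.2)) (ρ (β q.1) (φ r.2)) -
        bv (ψ (ψ p.2)) (ρ (β r.1) (φ q.2))) +
      bv (ψ (ψ p.2)) (bv (ψ q.2) (φ r.2)) := by
  simp only [semidirectBracket, Prod.map_fst, Prod.map_snd, hσ, hτ, map_add, map_sub,
    (hbv.2 _).map_add, (hbv.2 _).map_sub]
  abel

theorem semidirectBracket_jacobi_iff (hb : IsBiHomLie K b α β) (hbv : IsBiHomLie K bv φ ψ)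
    (hσ : ∀ x, σ (α x) = β x) (hτ : ∀ v, τ (ψ v) = φ v) :
    (∀ p q r,
      semidirectBracket b bv ρ σ τ (Prod.map β ψ (Prod.map β ψ p))
          (semidirectBracket b bv ρ σ τ (Prod.map β ψ q) (Prod.map α φ r)) +
        semidirectBracket b bv ρ σ τ (Prod.map β ψ (Prod.map β ψ q))
          (semidirectBracket b bv ρ σ τ (Prod.map β ψ r) (Prod.map α φ p)) +
        semidirectBracket b bv ρ σ τ (Prod.map β ψ (Prod.map β ψ r))
          (semidirectBracket b bv ρ σ τ (Prod.map β ψ p) (Prod.map α φ q)) = 0) ↔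
      (∀ x y w, ρ (σ (b (β x) (α y))) (φ (ψ w)) =
        ρ (β (β x)) (ρ (β y) (φ w)) - ρ (β (β y)) (ρ (β x) (φ w))) ∧
      ∀ x u v, ρ (β (β x)) (bv (ψ u) (φ v)) =
        bv (ψ (ψ u)) (ρ (β x) (φ v)) - bv (ψ (ψ v)) (ρ (β x) (φ u)) := by
  have h_snd := snd_semidirectBracket_semidirectBracket (b := b) (ρ := ρ) hbv.1 hσ hτ
  obtain ⟨⟨hb_left, hb_right⟩, hα, hβ, -, -, -, -, hb_jac⟩ := hb
  obtain ⟨⟨hbv_left, hbv_right⟩, hφ, hψ, -, -, -, -, hbv_jac⟩ := hbv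
  constructor
  · intro h
    constructor
    · intro x y w
      have hxyw := congrArg Prod.snd (h (x, 0) (y, 0) (0, w))
      simp only [Prod.snd_add, Prod.snd_zero, h_snd, hφ.map_zero, hψ.map_zero, map_zero,
        (hbv_left _).map_zero, (hbv_right _).map_zero, hβ.map_zero] at hxyw
      linear_combination (norm := abel) -hxyw
    · intro x u v
      have hxuv := congrArg Prod.snd (h (x, 0) (0, u) (0, v))
      have hσ_zero : σ 0 = 0 := by simpa only [hα.map_zero, hβ.map_zero] using hσ 0
      simp only [Prod.snd_add, Prod.snd_zero, h_snd, hα.map_zero, hβ.map_zero, hφ.map_zero,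
        hψ.map_zero, hσ_zero, map_zero, (hb_left _).map_zero, (hb_right _).map_zero,
        (hbv_left _).map_zero, (hbv_right _).map_zero, LinearMap.zero_apply] at hxuv
      linear_combination (norm := abel) hxuv
  · rintro ⟨h_rep, h_der⟩ ⟨x, u⟩ ⟨y, v⟩ ⟨z, w⟩
    refine Prod.ext (hb_jac x y z) ?_
    simp only [Prod.snd_add, Prod.snd_zero, h_snd, h_rep, h_der]
    linear_combination (norm := abel) hbv_jac u v w

theorem representation_identity_iff_twisted (hσ_mul : ∀ x y, σ (b x y) = b (σ x) (σ y))
    (hσ : ∀ x, σ (α x) = β x) (hασ : ∀ x, α (σ x) = β x) (hφψ : Function.Commute φ ψ)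
    (hσ_surj : Surjective σ) (hβ_surj : Surjective β) (hφ_surj : Surjective φ) :
    (∀ x y v, ρ (b (β x) y) (ψ v) = ρ (α (β x)) (ρ y v) - ρ (β y) (ρ (α x) v)) ↔
      ∀ x y w, ρ (σ (b (β x) (α y))) (φ (ψ w)) =
        ρ (β (β x)) (ρ (β y) (φ w)) - ρ (β (β y)) (ρ (β x) (φ w)) := by
  have hβσ (x : A) : β (σ x) = σ (β x) := by rw [← hασ x, hσ]
  rw [hσ_surj.forall]
  refine forall_congr' fun x => ?_
  rw [hβ_surj.forall]
  refine forall_congr' fun y => ?_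
  rw [hφ_surj.forall]
  refine forall_congr' fun w => ?_
  rw [hσ_mul, hσ, hβσ, hασ, hασ, hφψ.eq]

theorem derivation_identity_iff_twisted (hbv : ∀ u v, bv (ψ u) (φ v) = -bv (ψ v) (φ u))
    (hφψ : Function.Commute φ ψ) (hραφ : ∀ x v, ρ (α x) (φ v) = φ (ρ x v))
    (hρβψ : ∀ x v, ρ (β x) (ψ v) = ψ (ρ x v)) (hαβ : Function.Commute α β)
    (hασ : ∀ x, α (σ x) = β x) (hσ_surj : Surjective σ) (hφ_surj : Surjective φ)
    (hψ_surj : Surjective ψ) :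
    (∀ x u v, ρ (α (β x)) (bv u v) = bv (ρ (β x) u) (ψ v) + bv (ψ u) (ρ (α x) v)) ↔
      ∀ x u v, ρ (β (β x)) (bv (ψ u) (φ v)) =
        bv (ψ (ψ u)) (ρ (β x) (φ v)) - bv (ψ (ψ v)) (ρ (β x) (φ u)) := by
  have hswap (x : A) (u v : V) :
      bv (ρ (β (σ x)) (ψ u)) (ψ (φ v)) = -bv (ψ (ψ v)) (ρ (β x) (φ u)) := by
    rw [hρβψ, ← hφψ.eq, hbv, ← hραφ, hασ]
  rw [hσ_surj.forall]
  refine forall_congr' fun x => ?_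
  rw [hψ_surj.forall]
  refine forall_congr' fun u => ?_
  rw [hφ_surj.forall]
  refine forall_congr' fun v => ?_
  rw [hswap, hαβ.eq, hασ, neg_add_eq_sub]

theorem isBiHomLie_semidirectBracket_iff (hb : IsBiHomLie K b α β) (hbv : IsBiHomLie K bv φ ψ)
    (hα_surj : Surjective α) (hβ_surj : Surjective β) (hφ_surj : Surjective φ)
    (hψ_surj : Surjective ψ) (hσ : ∀ x, σ (α x) = β x) (hτ : ∀ v, τ (ψ v) = φ v) :
    IsBiHomLie K (semidirectBracket b bv ρ σ τ) (Prod.map α φ) (Prod.map β ψ) ↔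
      (∀ x v, ρ (α x) (φ v) = φ (ρ x v)) ∧ (∀ x v, ρ (β x) (ψ v) = ψ (ρ x v)) ∧
      (∀ x y v, ρ (b (β x) y) (ψ v) = ρ (α (β x)) (ρ y v) - ρ (β y) (ρ (α x) v)) ∧
      ∀ x u v, ρ (α (β x)) (bv u v) = bv (ρ (β x) u) (ψ v) + bv (ψ u) (ρ (α x) v) := by
  have hjac_iff := semidirectBracket_jacobi_iff (ρ := ρ) hb hbv hσ hτ
  obtain ⟨hb_bilin, hα, hβ, hαβ, hα_mul, hβ_mul, hb_skew, -⟩ := hb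
  obtain ⟨hbv_bilin, hφ, hψ, hφψ, hφ_mul, hψ_mul, hbv_skew, -⟩ := hbv
  have hσ_lin := isLinearMap_of_comp_eq hα hβ hα_surj hσ
  have hτ_lin := isLinearMap_of_comp_eq hψ hφ hψ_surj hτ
  have hσ_mul := map_mul_of_comp_eq hα_mul hβ_mul hα_surj hσ
  have hασ : Function.Commute α σ := commute_of_comp_eq (.refl α) hαβ hα_surj hσ
  have hβσ : Function.Commute β σ :=
    commute_of_comp_eq (Function.Commute.symm hαβ) (.refl β) hα_surj hσ
  have hφτ : Function.Commute φ τ := commute_of_comp_eq hφψ (.refl φ) hψ_surj hτ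
  have hψτ : Function.Commute ψ τ :=
    commute_of_comp_eq (.refl ψ) (Function.Commute.symm hφψ) hψ_surj hτ
  have hασ_eq (x : A) : α (σ x) = β x := by rw [hασ.eq, hσ]
  have hσ_surj : Surjective σ := .of_comp (g := α) ((funext hσ : σ ∘ α = β) ▸ hβ_surj)
  have hα_iff := prodMap_semidirectBracket_iff (ρ := ρ) hbv_bilin hφ hτ_lin hα_mul hφ_mul hασ hφτ
  have hβ_iff := prodMap_semidirectBracket_iff (ρ := ρ) hbv_bilin hψ hτ_lin hβ_mul hψ_mul hβσ hψτ
  have hrep_iff := representation_identity_iff_twisted (ρ := ρ) hσ_mul hσ hασ_eq hφψ hσ_surj hβ_surj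
    hφ_surj
  have hder_iff := fun hραφ hρβψ => derivation_identity_iff_twisted (ρ := ρ) hbv_skew hφψ hραφ hρβψ
    hαβ hασ_eq hσ_surj hφ_surj hψ_surj
  constructor
  · rintro ⟨-, -, -, -, hmap_α, hmap_β, -, hjac⟩
    have hραφ := hα_iff.1 hmap_α
    have hρβψ := hβ_iff.1 hmap_β
    exact ⟨hραφ, hρβψ, hrep_iff.2 (hjac_iff.1 hjac).1, (hder_iff hραφ hρβψ).2 (hjac_iff.1 hjac).2⟩
  · rintro ⟨hραφ, hρβψ, hrep, hder⟩
    exact ⟨isBilin_semidirectBracket hb_bilin hbv_bilin hσ_lin hτ_lin,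
      ((hα.mk' α).prodMap (hφ.mk' φ)).isLinear, ((hβ.mk' β).prodMap (hψ.mk' ψ)).isLinear,
      fun p => Prod.ext (hαβ p.1) (hφψ p.2), hα_iff.2 hραφ, hβ_iff.2 hρβψ,
      semidirectBracket_skew hb_skew hbv_skew hσ hτ,
      hjac_iff.2 ⟨hrep_iff.1 hrep, (hder_iff hραφ hρβψ).1 hder⟩⟩

theorem IsBiHomLie.of_semidirectBracket (hb : IsBiHomLie K b α β) (hσ : ∀ x, σ (α x) = β x)
    (h : IsBiHomLie K (semidirectBracket b bv ρ σ τ) (Prod.map α φ) (Prod.map β ψ)) :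
    IsBiHomLie K bv φ ψ := by
  obtain ⟨⟨hb_left, -⟩, hα, hβ, -⟩ := hb
  have hσ_zero : σ 0 = 0 := by simpa only [hα.map_zero, hβ.map_zero] using hσ 0
  refine h.of_injective (LinearMap.inr K A V) LinearMap.inr_injective (fun u v => ?_)
    (fun v => ?_) (fun v => ?_)
  · simp [semidirectBracket, (hb_left _).map_zero, hσ_zero]
  · simp [hα.map_zero]
  · simp [hβ.map_zero]

theorem moduleKAlgebra_iff_semidirect_general (hb : IsBiHomLie K b α β)
    (hα_surj : Surjective α) (hβ_surj : Surjective β) (hφ_surj : Surjective φ)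
    (hψ_surj : Surjective ψ) (hσ : ∀ x, σ (α x) = β x) (hτ : ∀ v, τ (ψ v) = φ v) :
    IsModuleKAlgebra K b α β bv (fun x v => ρ x v) φ ψ ↔
      IsBiHomLie K (semidirectBracket b bv ρ σ τ) (Prod.map α φ) (Prod.map β ψ) := by
  have key (hbv : IsBiHomLie K bv φ ψ) := isBiHomLie_semidirectBracket_iff (ρ := ρ) hb hbv
    hα_surj hβ_surj hφ_surj hψ_surj hσ hτ
  constructor
  · rintro ⟨hbv, ⟨-, -, -, -, -, hραφ, hρβψ, hrep⟩, hder⟩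
    exact (key hbv).2 ⟨hραφ, hρβψ, hrep, hder⟩
  · intro h
    have hbv := hb.of_semidirectBracket hσ h
    obtain ⟨hραφ, hρβψ, hrep, hder⟩ := (key hbv).1 h
    have ⟨_, hφ, hψ, hφψ, _⟩ := hbv
    exact ⟨hbv, ⟨hφ, hψ, hφψ, fun x => (ρ x).isLinear, fun v => (ρ.flip v).isLinear, hραφ, hρβψ,
      hrep⟩, hder⟩

end Semidirect

/-- semidirect sum characterization of `A`-module `K`-algebras. -/
theorem moduleKAlgebra_iff_semidirect {K A V : Type*} [Field K] [CharZero K]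
    [AddCommGroup A] [Module K A] [AddCommGroup V] [Module K V]
    (b : A → A → A) (α β α' β' : A → A) (bv : V → V → V) (ρ : A → V → V)
    (φ ψ φ' ψ' : V → V)
    (hb : IsBiHomLie K b α β)
    (hαα' : ∀ x, α (α' x) = x) (hα'α : ∀ x, α' (α x) = x)
    (hββ' : ∀ x, β (β' x) = x) (hβ'β : ∀ x, β' (β x) = x)
    (hbv : IsBiHomLie K bv φ ψ)
    (hφφ' : ∀ v, φ (φ' v) = v) (hφ'φ : ∀ v, φ' (φ v) = v)
    (hψψ' : ∀ v, ψ (ψ' v) = v) (hψ'ψ : ∀ v, ψ' (ψ v) = v)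
    (hρ1 : ∀ x, IsLinearMap K (ρ x)) (hρ2 : ∀ v, IsLinearMap K fun x => ρ x v) :
    IsModuleKAlgebra K b α β bv ρ φ ψ ↔
      IsBiHomLie K
        (fun p q : A × V =>
          (b p.1 q.1, ρ p.1 q.2 - ρ (α' (β q.1)) (φ (ψ' p.2)) + bv p.2 q.2))
        (fun p => (α p.1, φ p.2)) (fun p => (β p.1, ψ p.2)) := by
  have ⟨_, _, _, hαβ, _⟩ := hb
  exact moduleKAlgebra_iff_semidirect_general hb (Function.RightInverse.surjective hαα')
    (Function.RightInverse.surjective hββ') (Function.RightInverse.surjective hφφ')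
    (Function.RightInverse.surjective hψψ')
    (ρ := .mk₂ K ρ (fun x y v => (hρ2 v).map_add x y) (fun c x v => (hρ2 v).map_smul c x)
      (fun x => (hρ1 x).map_add) (fun c x v => (hρ1 x).map_smul c v))
    (σ := fun x => α' (β x)) (τ := fun v => φ (ψ' v))
    (fun x => by rw [← hαβ, hα'α]) (fun v => by rw [hψ'ψ])
end

section
/- Let (A,[·,·],▷) be a (left) post-Lie algebra over a field K of characteristic zero and let α, β : A → A be two commuting post-Lie algebra morphisms (i.e., each preserves both [·,·] and ▷). Then (A,[·,·]_{α,β},▷_{α,β},α,β) is a BiHom-post-Lie algebra, where [x,y]_{α,β} = [α(x),β(y)] and x ▷_{α,β} y = α(x) ▷ β(y). -/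
/-!
Since `α` and `β` are morphisms commuting with the structure maps, they can be pushed inside both
operations; each axiom of the twisted algebra is then the same axiom of the original algebra at
shifted arguments. This works for a BiHom-post-Lie algebra with any structure maps `φ`, `ψ`, which
twisting replaces by `φ ∘ α`, `ψ ∘ β`; a post-Lie algebra is the case `φ = ψ = id`.
-/

section Twisting

variable {K : Type*} [Field K] {A B V : Type*} [AddCommGroup A] [Module K A]
  [AddCommGroup B] [Module K B] [AddCommGroup V] [Module K V]

theorem IsBilin.comp {f : A → A → V} {g h : B → A} (hf : IsBilin K f)
    (hg : IsLinearMap K g) (hh : IsLinearMap K h) : IsBilin K fun x y => f (g x) (h y) :=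
  ⟨fun y => ((hf.1 (h y)).mk' _ ∘ₗ hg.mk' g).isLinear,
    fun x => ((hf.2 (g x)).mk' _ ∘ₗ hh.mk' h).isLinear⟩

variable {b t : A → A → A} {α β φ ψ : A → A}

theorem IsLieBracket.isBiHomLie_id (hb : IsLieBracket K b) : IsBiHomLie K b id id := by
  obtain ⟨bilin, skew, jacobi⟩ := hb
  exact ⟨bilin, LinearMap.id.isLinear, LinearMap.id.isLinear, fun _ => rfl, fun _ _ => rfl,
    fun _ _ => rfl, skew, jacobi⟩

theorem IsPostLie.isBiHomPostLie_id (h : IsPostLie K b t) : IsBiHomPostLie K b t id id := by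
  obtain ⟨lie, bilin, derivation, postLie⟩ := h
  exact ⟨lie.isBiHomLie_id, bilin, fun _ _ => rfl, fun _ _ => rfl, derivation, postLie⟩

theorem IsBiHomLie.twist (h : IsBiHomLie K b φ ψ)
    (hα : IsLinearMap K α) (hβ : IsLinearMap K β)
    (hαb : Function.Semiconj₂ α b b) (hβb : Function.Semiconj₂ β b b)
    (hαβ : Function.Commute α β) (hαφ : Function.Commute α φ) (hαψ : Function.Commute α ψ)
    (hβφ : Function.Commute β φ) (hβψ : Function.Commute β ψ) :
    IsBiHomLie K (fun x y => b (α x) (β y)) (φ ∘ α) (ψ ∘ β) := by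
  obtain ⟨bilin, hφ, hψ, hφψ, hφb, hψb, skew, jacobi⟩ := h
  have commute : Function.Commute (φ ∘ α) (ψ ∘ β) :=
    (Function.Commute.comp_right hφψ hβφ.symm).comp_left (hαψ.comp_right hαβ)
  refine ⟨bilin.comp hα hβ, (hφ.mk' φ ∘ₗ hα.mk' α).isLinear, (hψ.mk' ψ ∘ₗ hβ.mk' β).isLinear,
    commute, fun x y => ?map_left, fun x y => ?map_right, fun x y => ?skew,
    fun x y z => ?jacobi⟩
  case map_left => simp only [Function.comp_apply, hαb.eq, hφb, hαβ.eq, hαφ.eq, hβφ.eq]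
  case map_right => simp only [Function.comp_apply, hβb.eq, hψb, hαβ.eq, hαψ.eq, hβψ.eq]
  case skew =>
    simpa only [Function.comp_apply, hαβ.eq, hαψ.eq, hβφ.eq] using skew (β (α x)) (β (α y))
  case jacobi =>
    simpa only [Function.comp_apply, hβb.eq, hαβ.eq, hαψ.eq, hβφ.eq, hβψ.eq] using
      jacobi (β (β (α x))) (β (β (α y))) (β (β (α z)))

theorem biHomPostLie_of_twisted_postLie_general (h : IsBiHomPostLie K b t φ ψ)
    (hα : IsLinearMap K α) (hβ : IsLinearMap K β)
    (hαb : Function.Semiconj₂ α b b) (hβb : Function.Semiconj₂ β b b)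
    (hαt : Function.Semiconj₂ α t t) (hβt : Function.Semiconj₂ β t t)
    (hαβ : Function.Commute α β) (hαφ : Function.Commute α φ) (hαψ : Function.Commute α ψ)
    (hβφ : Function.Commute β φ) (hβψ : Function.Commute β ψ) :
    IsBiHomPostLie K (fun x y => b (α x) (β y)) (fun x y => t (α x) (β y))
      (φ ∘ α) (ψ ∘ β) := by
  obtain ⟨lie, bilin, hφt, hψt, derivation, postLie⟩ := h
  refine ⟨lie.twist hα hβ hαb hβb hαβ hαφ hαψ hβφ hβψ, bilin.comp hα hβ,
    fun x y => ?map_left, fun x y => ?map_right, fun x y z => ?derivation,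
    fun x y z => ?postLie⟩
  case map_left => simp only [Function.comp_apply, hαt.eq, hφt, hαβ.eq, hαφ.eq, hβφ.eq]
  case map_right => simp only [Function.comp_apply, hβt.eq, hψt, hαβ.eq, hαψ.eq, hβψ.eq]
  case derivation =>
    simpa only [Function.comp_apply, hβb.eq, hαt.eq, hβt.eq, hαβ.eq, hαφ.eq, hαψ.eq, hβφ.eq, hβψ.eq]
      using derivation (β (α (α x))) (β (α y)) (β (β z))
  case postLie =>
    simpa only [Function.comp_apply, hαb.eq, hαt.eq, hβt.eq, hαβ.eq, hαφ.eq, hαψ.eq, hβφ.eq, hβψ.eq]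
      using postLie (β (α (α x))) (β (α (α y))) (β (β z))

end Twisting

/-- twisting a post-Lie algebra by two commuting morphisms yields
a BiHom-post-Lie algebra. -/
theorem biHomPostLie_of_twisted_postLie {K A : Type*} [Field K] [CharZero K]
    [AddCommGroup A] [Module K A] (b t : A → A → A) (α β : A → A)
    (h : IsPostLie K b t)
    (hα : IsLinearMap K α) (hβ : IsLinearMap K β)
    (hαb : ∀ x y, α (b x y) = b (α x) (α y))
    (hβb : ∀ x y, β (b x y) = b (β x) (β y))
    (hαt : ∀ x y, α (t x y) = t (α x) (α y))
    (hβt : ∀ x y, β (t x y) = t (β x) (β y))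
    (hcomm : ∀ x, α (β x) = β (α x)) :
    IsBiHomPostLie K (fun x y => b (α x) (β y)) (fun x y => t (α x) (β y)) α β :=
  biHomPostLie_of_twisted_postLie_general h.isBiHomPostLie_id hα hβ hαb hβb hαt hβt hcomm
    .id_right .id_right .id_right .id_right
end

section
/- Let (A,[·,·],▷,α,β) be a regular BiHom-post-Lie algebra over a field K of characteristic zero. Define x ∘ y = x ▷ y + (1/2)[x,y] for all x,y ∈ A. Then (A,∘,α,β) is an admissible BiHom-Lie algebra, i.e., the bracket [x,y]' = x ∘ y − α⁻¹β(y) ∘ αβ⁻¹(x) makes (A,[·,·]',α,β) a BiHom-Lie algebra. -/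
/-!
Untwist the operations to `⟦x, y⟧ = [α⁻¹x, β⁻¹y]` and `x ⊳ y = α⁻¹x ▷ β⁻¹y`. After a change of
variables, the BiHom-post-Lie axioms say exactly that `⟦·,·⟧` and `⊳` form an ordinary post-Lie
algebra on which `α` and `β` act by endomorphisms. The sub-adjacent bracket
`x ⊳ y - y ⊳ x + ⟦x, y⟧` of a post-Lie algebra is a Lie bracket, and twisting it back by `α` and `β`
gives the BiHom-Lie bracket `x ▷ y - α⁻¹β(y) ▷ αβ⁻¹(x) + [x, y]`. BiHom-skew-symmetry gives
`[α⁻¹β(y), αβ⁻¹(x)] = -[x, y]`, so each of the two halves of `[·,·]` in `x ∘ y` contributes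
`[x, y] / 2` to the BiHom-commutator of `∘`, which is therefore the same bracket.
-/

section Operations

variable {A V : Type*}

/-- The Yau twist of a binary operation `m` by the maps `f` and `g`, which turns Lie-type structures
into BiHom-structures. It is defined for arbitrary maps so that untwisting is twisting by the
inverse maps. -/
def yauTwist (m : A → A → V) (f g : A → A) : A → A → V :=
  fun x y => m (f x) (g y)

/-- The sub-adjacent bracket of a post-Lie algebra with Lie bracket `b` and product `t`. -/
def subAdjacent [AddCommGroup A] (b t : A → A → A) : A → A → A :=
  fun x y => t x y - t y x + b x y

/-- The BiHom-commutator `x * y - α⁻¹β(y) * αβ⁻¹(x)` of a regular BiHom-algebra with product `m`;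
regularity is encoded by taking the structure maps to be equivalences. -/
def biHomCommutator [AddCommGroup V] (m : A → A → V) (α β : A ≃ A) : A → A → V :=
  fun x y => m x y - m (α.symm (β y)) (α (β.symm x))

theorem commute_equiv_symm_right {f : A → A} {e : A ≃ A} (h : Function.Commute f e) :
    Function.Commute f e.symm :=
  h.semiconj.inverses_right e.right_inv e.left_inv

theorem semiconj₂_equiv_symm {e : A ≃ A} {m : A → A → A} (h : Function.Semiconj₂ e m m) :
    Function.Semiconj₂ e.symm m m := fun x y =>
  e.symm_apply_eq.2 (by rw [h.eq, e.apply_symm_apply, e.apply_symm_apply])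

theorem semiconj₂_yauTwist {φ f g : A → A} {m : A → A → A} (hm : Function.Semiconj₂ φ m m)
    (hf : Function.Commute φ f) (hg : Function.Commute φ g) :
    Function.Semiconj₂ φ (yauTwist m f g) (yauTwist m f g) := fun x y => by
  simp only [yauTwist, hm.eq, hf.eq, hg.eq]

end Operations

section Linear

variable {K A V : Type*} [Field K] [AddCommGroup A] [Module K A] [AddCommGroup V] [Module K V]

theorem isLinearMap_equiv_symm {e : A ≃ V} (he : IsLinearMap K e) : IsLinearMap K e.symm :=
  ((he.mk' e).inverse e.symm e.left_inv e.right_inv).isLinear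

theorem semiconj₂_subAdjacent {φ : A → A} {b t : A → A → A} (hφ : IsLinearMap K φ)
    (hb : Function.Semiconj₂ φ b b) (ht : Function.Semiconj₂ φ t t) :
    Function.Semiconj₂ φ (subAdjacent b t) (subAdjacent b t) := fun x y => by
  simp only [subAdjacent, hφ.map_add, hφ.map_sub, hb.eq, ht.eq]

namespace IsBilin

variable {m n : A → A → V}

theorem map_add_left (hm : IsBilin K m) (x x' y : A) : m (x + x') y = m x y + m x' y :=
  (hm.1 y).map_add x x'

theorem map_add_right (hm : IsBilin K m) (x y y' : A) : m x (y + y') = m x y + m x y' :=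
  (hm.2 x).map_add y y'

theorem map_sub_left (hm : IsBilin K m) (x x' y : A) : m (x - x') y = m x y - m x' y :=
  (hm.1 y).map_sub x x'

theorem map_sub_right (hm : IsBilin K m) (x y y' : A) : m x (y - y') = m x y - m x y' :=
  (hm.2 x).map_sub y y'

theorem add (hm : IsBilin K m) (hn : IsBilin K n) : IsBilin K fun x y => m x y + n x y :=
  ⟨fun y => ((hm.1 y).mk' _ + (hn.1 y).mk' _).isLinear,
    fun x => ((hm.2 x).mk' _ + (hn.2 x).mk' _).isLinear⟩

theorem sub (hm : IsBilin K m) (hn : IsBilin K n) : IsBilin K fun x y => m x y - n x y :=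
  ⟨fun y => ((hm.1 y).mk' _ - (hn.1 y).mk' _).isLinear,
    fun x => ((hm.2 x).mk' _ - (hn.2 x).mk' _).isLinear⟩

theorem flip (hm : IsBilin K m) : IsBilin K fun x y => m y x :=
  ⟨hm.2, hm.1⟩

theorem yauTwist {f g : A → A} (hm : IsBilin K m) (hf : IsLinearMap K f) (hg : IsLinearMap K g) :
    IsBilin K (yauTwist m f g) :=
  ⟨fun y => ((hm.1 (g y)).mk' _ ∘ₗ hf.mk' f).isLinear,
    fun x => ((hm.2 (f x)).mk' _ ∘ₗ hg.mk' g).isLinear⟩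

end IsBilin

end Linear

section PostLie

variable {K A : Type*} [Field K] [AddCommGroup A] [Module K A]

theorem IsPostLie.isLieBracket_subAdjacent {b t : A → A → A} (h : IsPostLie K b t) :
    IsLieBracket K (subAdjacent b t) := by
  obtain ⟨⟨b_bilin, b_skew, b_jacobi⟩, t_bilin, t_derivation, t_bracket⟩ := h
  refine ⟨(t_bilin.sub t_bilin.flip).add b_bilin, fun x y => ?_, fun x y z => ?_⟩
  · simp only [subAdjacent, b_skew x y]
    abel
  · simp only [subAdjacent, b_bilin.map_add_right, b_bilin.map_sub_right, t_bilin.map_add_left,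
      t_bilin.map_sub_left, t_bilin.map_add_right, t_bilin.map_sub_right, t_derivation, t_bracket]
    -- Up to skew-symmetry, the terms that contain `t` cancel in pairs.
    rw [b_skew (t x y) z, b_skew (t y z) x, b_skew (t z x) y, ← b_jacobi x y z]
    abel

theorem IsLieBracket.isBiHomLie_yauTwist {b : A → A → A} {α β : A → A} (h : IsLieBracket K b)
    (hα : IsLinearMap K α) (hβ : IsLinearMap K β) (hαβ : Function.Commute α β)
    (hbα : Function.Semiconj₂ α b b) (hbβ : Function.Semiconj₂ β b b) :
    IsBiHomLie K (yauTwist b α β) α β := by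
  obtain ⟨b_bilin, b_skew, b_jacobi⟩ := h
  refine ⟨b_bilin.yauTwist hα hβ, hα, hβ, hαβ, semiconj₂_yauTwist hbα (.refl α) hαβ,
    semiconj₂_yauTwist hbβ hαβ.symm (.refl β), fun x y => ?_, fun x y z => ?_⟩
  · simpa only [yauTwist, hαβ.eq] using b_skew (β (α x)) (β (α y))
  · simpa only [yauTwist, hαβ.eq, hbβ.eq] using b_jacobi (β (β (α x))) (β (β (α y))) (β (β (α z)))

theorem IsBiHomPostLie.isPostLie_yauTwist_symm {b t : A → A → A} {α β : A ≃ A}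
    (h : IsBiHomPostLie K b t α β) :
    IsPostLie K (yauTwist b α.symm β.symm) (yauTwist t α.symm β.symm) := by
  obtain ⟨⟨b_bilin, hα, hβ, hαβ, hbα, hbβ, b_skew, b_jacobi⟩, t_bilin, htα, htβ,
    t_derivation, t_bracket⟩ := h
  have hα_symm := isLinearMap_equiv_symm hα
  have hβ_symm := isLinearMap_equiv_symm hβ
  have α_β_symm : Function.Commute α β.symm := commute_equiv_symm_right hαβ
  have α_symm_β_symm : Function.Commute α.symm β.symm :=
    (commute_equiv_symm_right α_β_symm.symm).symm
  have b_α_symm := semiconj₂_equiv_symm hbα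
  have b_β_symm := semiconj₂_equiv_symm hbβ
  have t_α_symm := semiconj₂_equiv_symm htα
  have t_β_symm := semiconj₂_equiv_symm htβ
  -- Each axiom is instantiated so that its structure maps leave the twists by `α⁻¹` and `β⁻¹`.
  refine ⟨⟨b_bilin.yauTwist hα_symm hβ_symm, fun x y => ?_, fun x y z => ?_⟩,
    t_bilin.yauTwist hα_symm hβ_symm, fun x y z => ?_, fun x y z => ?_⟩
  · simpa [yauTwist, α_β_symm.eq] using b_skew (β.symm (α.symm x)) (β.symm (α.symm y))
  · simpa [yauTwist, α_β_symm.eq, b_β_symm.eq] using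
      b_jacobi (β.symm (β.symm (α.symm x))) (β.symm (β.symm (α.symm y)))
        (β.symm (β.symm (α.symm z)))
  · simpa [yauTwist, α_β_symm.eq, α_symm_β_symm.eq, b_β_symm.eq, t_α_symm.eq, t_β_symm.eq] using
      t_derivation (β.symm (α.symm (α.symm x))) (β.symm (α.symm y)) (β.symm (β.symm z))
  · simpa [yauTwist, α_β_symm.eq, α_symm_β_symm.eq, b_α_symm.eq, t_α_symm.eq, t_β_symm.eq] using
      t_bracket (β.symm (α.symm (α.symm x))) (β.symm (α.symm (α.symm y))) (β.symm (β.symm z))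

theorem yauTwist_subAdjacent_yauTwist_symm (b t : A → A → A) {α β : A ≃ A}
    (hαβ : Function.Commute α β) :
    yauTwist (subAdjacent (yauTwist b α.symm β.symm) (yauTwist t α.symm β.symm)) α β =
      biHomCommutator t α β + b := by
  ext x y
  simp [yauTwist, subAdjacent, biHomCommutator, (commute_equiv_symm_right hαβ).eq]

theorem IsBiHomPostLie.isBiHomLie_biHomCommutator_add {b t : A → A → A} {α β : A ≃ A}
    (h : IsBiHomPostLie K b t α β) : IsBiHomLie K (biHomCommutator t α β + b) α β := by
  have lie_subAdjacent := h.isPostLie_yauTwist_symm.isLieBracket_subAdjacent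
  obtain ⟨⟨-, hα, hβ, hαβ, hbα, hbβ, -, -⟩, -, htα, htβ, -, -⟩ := h
  have α_α_symm := commute_equiv_symm_right (.refl α)
  have β_β_symm := commute_equiv_symm_right (.refl β)
  have α_β_symm : Function.Commute α β.symm := commute_equiv_symm_right hαβ
  have β_α_symm : Function.Commute β α.symm :=
    commute_equiv_symm_right (Function.Commute.symm hαβ)
  rw [← yauTwist_subAdjacent_yauTwist_symm b t hαβ]
  exact lie_subAdjacent.isBiHomLie_yauTwist hα hβ hαβ
    (semiconj₂_subAdjacent hα (semiconj₂_yauTwist hbα α_α_symm α_β_symm)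
      (semiconj₂_yauTwist htα α_α_symm α_β_symm))
    (semiconj₂_subAdjacent hβ (semiconj₂_yauTwist hbβ β_α_symm β_β_symm)
      (semiconj₂_yauTwist htβ β_α_symm β_β_symm))

theorem IsBiHomLie.apply_swap_eq_neg {b : A → A → A} {α β : A ≃ A}
    (h : IsBiHomLie K b α β) (x y : A) : b (α.symm (β y)) (α (β.symm x)) = -b x y := by
  obtain ⟨-, -, -, hαβ, -, -, b_skew, -⟩ := h
  have β_α_symm : Function.Commute β α.symm :=
    commute_equiv_symm_right (Function.Commute.symm hαβ)
  simpa [β_α_symm.eq] using b_skew (α.symm y) (β.symm x)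

theorem IsBiHomLie.biHomCommutator_add_half_smul [NeZero (2 : K)] {b : A → A → A}
    {α β : A ≃ A} (h : IsBiHomLie K b α β) (t : A → A → A) :
    biHomCommutator (t + (1 / 2 : K) • b) α β = biHomCommutator t α β + b := by
  ext x y
  have half_add_half : (1 / 2 : K) • b x y + (1 / 2 : K) • b x y = b x y := by
    rw [← add_smul, add_halves, one_smul]
  calc
    biHomCommutator (t + (1 / 2 : K) • b) α β x y
      = biHomCommutator t α β x y + ((1 / 2 : K) • b x y + (1 / 2 : K) • b x y) := by
        simp only [biHomCommutator, Pi.add_apply, Pi.smul_apply, h.apply_swap_eq_neg,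
          smul_neg]
        abel
    _ = biHomCommutator t α β x y + b x y := by rw [half_add_half]

end PostLie

theorem admissible_of_biHomPostLie_general {K A : Type*} [Field K] [NeZero (2 : K)]
    [AddCommGroup A] [Module K A] (b t : A → A → A) (α β α' β' : A → A)
    (h : IsBiHomPostLie K b t α β)
    (hαα' : ∀ x, α (α' x) = x) (hα'α : ∀ x, α' (α x) = x)
    (hββ' : ∀ x, β (β' x) = x) (hβ'β : ∀ x, β' (β x) = x) :
    IsBiHomLie K
      (fun x y =>
        (t x y + (1 / 2 : K) • b x y) -
          (t (α' (β y)) (α (β' x)) + (1 / 2 : K) • b (α' (β y)) (α (β' x))))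
      α β := by
  let αe : A ≃ A := ⟨α, α', hα'α, hαα'⟩
  let βe : A ≃ A := ⟨β, β', hβ'β, hββ'⟩
  have h_equiv : IsBiHomPostLie K b t αe βe := h
  change IsBiHomLie K (biHomCommutator (t + (1 / 2 : K) • b) αe βe) αe βe
  rw [h_equiv.1.biHomCommutator_add_half_smul t]
  exact h_equiv.isBiHomLie_biHomCommutator_add

/-- a regular BiHom-post-Lie algebra gives an admissible
BiHom-Lie algebra via `x ∘ y = x ▷ y + (1/2)[x,y]`. -/
theorem admissible_of_biHomPostLie {K A : Type*} [Field K] [CharZero K]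
    [AddCommGroup A] [Module K A] (b t : A → A → A) (α β α' β' : A → A)
    (h : IsBiHomPostLie K b t α β)
    (hαα' : ∀ x, α (α' x) = x) (hα'α : ∀ x, α' (α x) = x)
    (hββ' : ∀ x, β (β' x) = x) (hβ'β : ∀ x, β' (β x) = x) :
    IsBiHomLie K
      (fun x y =>
        (t x y + (1 / 2 : K) • b x y) -
          (t (α' (β y)) (α (β' x)) + (1 / 2 : K) • b (α' (β y)) (α (β' x))))
      α β :=
  admissible_of_biHomPostLie_general b t α β α' β' h hαα' hα'α hββ' hβ'β
end

section
/- Let (A,[·,·],▷,α,β) be a regular BiHom-post-Lie algebra over a field K of characteristic zero and let L_▷ : A → gl(A) be defined by L_▷(x)(y) = x ▷ y. Then (A, L_▷, α, β) is a representation of the sub-adjacent BiHom-Lie algebra (A,{·,·},α,β), where {x,y} = x ▷ y − α⁻¹β(y) ▷ αβ⁻¹(x) + [x,y]. -/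
/-!
On arguments of the form `(β x, α y)` the twists in the sub-adjacent bracket cancel:
`{β x, α y} = β x ▷ α y − β y ▷ α x + [β x, α y]`. Let this act on `β z`. The bracket term
contributes `as(β x, α y, z) − as(β y, α x, z)`, whose parts `−(β x ▷ α y) ▷ β z` and
`(β y ▷ α x) ▷ β z` cancel the other two terms, so that only the twisted commutator of left
multiplications remains. Since `α` is surjective, every second argument of the bracket is of the
form `α y`.
-/

section SubadjacentBracket

variable {A : Type*} [AddCommGroup A]

/-- The BiHom-associator `as(x, y, z) = α(x) ▷ (y ▷ z) − (x ▷ y) ▷ β(z)` of `▷ = t`, used to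
state the axiom `[β(x), α(y)] ▷ β(z) = as(β(x), α(y), z) − as(β(y), α(x), z)`. -/
def biHomAssociator (t : A → A → A) (α β : A → A) (x y z : A) : A :=
  t (α x) (t y z) - t (t x y) (β z)

/-- The bracket `{x, y} = x ▷ y − α⁻¹β(y) ▷ αβ⁻¹(x) + [x, y]` of the sub-adjacent BiHom-Lie
algebra, where `▷ = t` and `[·,·] = b`. The maps `α'` and `β'` play the roles of `α⁻¹` and `β⁻¹`. -/
def subadjacentBracket (b t : A → A → A) (α β α' β' : A → A) (x y : A) : A :=
  t x y - t (α' (β y)) (α (β' x)) + b x y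

variable {b t : A → A → A} {α β α' β' : A → A}

lemma subadjacentBracket_apply_apply (hαβ : Function.Commute α β)
    (hα' : Function.LeftInverse α' α) (hβ' : Function.LeftInverse β' β) (x y : A) :
    subadjacentBracket b t α β α' β' (β x) (α y) =
      t (β x) (α y) - t (β y) (α x) + b (β x) (α y) := by
  rw [subadjacentBracket, ← hαβ y, hα', hβ']

lemma leftMul_subadjacentBracket_apply_apply {R : Type*} [Ring R] [Module R A]
    (ht : ∀ z, IsLinearMap R fun x => t x z) (hαβ : Function.Commute α β)
    (hassoc : ∀ x y z, t (b (β x) (α y)) (β z) =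
      biHomAssociator t α β (β x) (α y) z - biHomAssociator t α β (β y) (α x) z)
    (hα' : Function.LeftInverse α' α) (hβ' : Function.LeftInverse β' β) (x y z : A) :
    t (subadjacentBracket b t α β α' β' (β x) (α y)) (β z) =
      t (α (β x)) (t (α y) z) - t (α (β y)) (t (α x) z) := by
  calc
    _ = t (t (β x) (α y) - t (β y) (α x) + b (β x) (α y)) (β z) := by
      rw [subadjacentBracket_apply_apply hαβ hα' hβ']
    _ = t (t (β x) (α y)) (β z) - t (t (β y) (α x)) (β z) + t (b (β x) (α y)) (β z) := by
      rw [(ht (β z)).map_add, (ht (β z)).map_sub]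
    _ = t (t (β x) (α y)) (β z) - t (t (β y) (α x)) (β z) +
        (biHomAssociator t α β (β x) (α y) z - biHomAssociator t α β (β y) (α x) z) := by
      rw [hassoc]
    _ = t (α (β x)) (t (α y) z) - t (α (β y)) (t (α x) z) := by
      simp only [biHomAssociator]
      abel

theorem leftMul_rep_of_biHomPostLie_general {K : Type*} [Field K] [Module K A]
    (hα : IsLinearMap K α) (hβ : IsLinearMap K β) (hαβ : Function.Commute α β)
    (ht : IsBilin K t) (hαt : ∀ x y, α (t x y) = t (α x) (α y))
    (hβt : ∀ x y, β (t x y) = t (β x) (β y))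
    (hassoc : ∀ x y z, t (b (β x) (α y)) (β z) =
      biHomAssociator t α β (β x) (α y) z - biHomAssociator t α β (β y) (α x) z)
    (hα_surj : Function.Surjective α) (hα' : Function.LeftInverse α' α)
    (hβ' : Function.LeftInverse β' β) :
    IsBiHomRep K (subadjacentBracket b t α β α' β') α β t α β := by
  refine ⟨hα, hβ, hαβ, ht.2, ht.1, fun x y => (hαt x y).symm, fun x y => (hβt x y).symm, ?_⟩
  intro x y z
  obtain ⟨w, rfl⟩ := hα_surj y
  rw [leftMul_subadjacentBracket_apply_apply ht.1 hαβ hassoc hα' hβ', hαβ w]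

end SubadjacentBracket

/-- `L_▷` is a representation of the sub-adjacent BiHom-Lie
algebra of a regular BiHom-post-Lie algebra. -/
theorem leftMul_rep_of_biHomPostLie {K A : Type*} [Field K] [CharZero K]
    [AddCommGroup A] [Module K A] (b t : A → A → A) (α β α' β' : A → A)
    (h : IsBiHomPostLie K b t α β)
    (hαα' : ∀ x, α (α' x) = x) (hα'α : ∀ x, α' (α x) = x)
    (hββ' : ∀ x, β (β' x) = x) (hβ'β : ∀ x, β' (β x) = x) :
    IsBiHomRep K (fun x y => t x y - t (α' (β y)) (α (β' x)) + b x y) α β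
      (fun x y => t x y) α β := by
  obtain ⟨⟨_, hα, hβ, hαβ, _⟩, ht, hαt, hβt, _, hassoc⟩ := h
  exact leftMul_rep_of_biHomPostLie_general hα hβ hαβ ht hαt hβt hassoc
    (Function.RightInverse.surjective hαα') hα'α hβ'β
end
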